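/- Let q be an odd prime power with 3 a nonzero square in F_q, and n a positive integer. If A ⊆ (F_q^n)² avoids all triples x, x + d, x + M₂d with d ≠ 0, where M₂ = [[b, −ab],[ab, b]], a² = 3, b = 2⁻¹, then |A| ≤ 3·c_q^{2n} with c_q = inf_{0<x<1} (1 − x^q)/(x^{(q−1)/3}(1 − x)). -/

import Mathlib

/-!
Tao's slice rank form of the polynomial method. If `X x + Y y + Z z = 0` holds exactly when
`x = y = z`, then `∏ i, (1 - (X x i + Y y i + Z z i) ^ (q - 1))` is the diagonal tensor. In each of
its monomials one of the three groups of variables carries at most a third of the degree, so the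
diagonal tensor is a sum of three tensors whose fibres in one direction are combinations of
monomials of low degree. There are at most `c_q ^ N` of these, by Markov's inequality for the
weights `x ^ deg`, whereas no such decomposition of the diagonal tensor uses fibre spaces of total
dimension less than the number of points.

A set `A` avoiding `x, x + d, x + f d` with `f` additive gives such a system, since `z = x + f d`
with `y = x + d` reads `(f x - x) - f y + z = 0`.
-/

open Finset Module

section LinearAlgebra

variable {K α : Type*} [Field K] [Fintype α]

lemma rank_add_le {β : Type*} [Finite β] (M N : Matrix β α K) : (M + N).rank ≤ M.rank + N.rank := by
  unfold Matrix.rank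
  rw [Matrix.mulVecLin_add]
  refine (Submodule.finrank_mono ?_).trans (Submodule.finrank_add_le_finrank_add_finrank _ _)
  rintro _ ⟨v, rfl⟩
  exact Submodule.add_mem_sup ⟨v, rfl⟩ ⟨v, rfl⟩

lemma exists_mem_finrank_le_card_support [DecidableEq K] (W : Submodule K (α → K)) :
    ∃ v ∈ W, finrank K W ≤ #{x | v x ≠ 0} := by
  -- A vector of maximal support works: restriction of `W` to that support is injective.
  obtain ⟨v, hvW, hmax⟩ := exists_maximalFor_of_wellFoundedGT (· ∈ W)
    (fun v : α → K => ({x | v x ≠ 0} : Finset α)) ⟨0, W.zero_mem⟩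
  refine ⟨v, hvW, ?_⟩
  set S : Finset α := {x | v x ≠ 0} with hS
  let restrict : W →ₗ[K] (S → K) := LinearMap.funLeft K K (fun s : S => (s : α)) ∘ₗ W.subtype
  have restrict_injective : Function.Injective restrict := by
    rw [injective_iff_map_eq_zero]
    intro w hw
    have hwS : ∀ x ∈ S, w.1 x = 0 := fun x hx => congrFun hw ⟨x, hx⟩
    have hsub : S ⊆ ({x | (v + w.1) x ≠ 0} : Finset α) := fun x hx => by
      simpa [hwS x hx, hS] using hx
    have hsup := hmax (W.add_mem hvW w.2) hsub
    ext x
    by_cases hx : x ∈ S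
    · exact hwS x hx
    · have hvx : v x = 0 := by simpa [hS] using hx
      simpa [hvx] using fun hne => hx (hsup (mem_filter.mpr ⟨mem_univ x, hne⟩))
  simpa using LinearMap.finrank_le_finrank_of_injective restrict_injective

lemma exists_orthogonal_card_le [DecidableEq K] (E : Submodule K (α → K)) :
    ∃ v : α → K, (∀ w ∈ E, w ⬝ᵥ v = 0) ∧
      Fintype.card α ≤ finrank K E + #{x | v x ≠ 0} := by
  classical
  let E' : Subspace K (Dual K (α → K)) := E.map (dotProductEquiv K α).toLinearMap
  obtain ⟨v, hv, hcard⟩ := exists_mem_finrank_le_card_support E'.dualCoannihilator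
  refine ⟨v, fun w hw => ?_, ?_⟩
  · exact (Submodule.mem_dualCoannihilator v).mp hv _ (Submodule.mem_map_of_mem hw)
  · have hdim := Subspace.finrank_add_finrank_dualCoannihilator_eq E'
    rw [LinearEquiv.finrank_map_eq, finrank_fintype_fun_eq_card] at hdim
    omega

end LinearAlgebra

section SliceRank

variable {R α β γ : Type*}

/-- The functions on `κ` whose pullbacks along all the maps `φ c : α → κ` lie in `E`; the `φ c`
parametrize the fibres of a product in one direction. -/
def fiberSpace {ι κ : Type*} [CommSemiring R] (φ : ι → α → κ) (E : Submodule R (α → R)) :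
    Submodule R (κ → R) :=
  ⨅ c, E.comap (LinearMap.funLeft R R (φ c))

/-- The tensors `T : α × β × γ → R` which are a sum of three tensors, the first with all fibres
`T (·, y, z)` in `E₁`, the second with all fibres `T (x, ·, z)` in `E₂`, and the third with all
fibres `T (x, y, ·)` in `E₃`. Over a field, a tensor has slice rank at most `r` if and only if it
lies in such a space with `dim E₁ + dim E₂ + dim E₃ ≤ r`. -/
def sliceSpace [CommSemiring R] (E₁ : Submodule R (α → R)) (E₂ : Submodule R (β → R))
    (E₃ : Submodule R (γ → R)) : Submodule R (α × β × γ → R) :=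
  fiberSpace (fun (c : β × γ) x => (x, c.1, c.2)) E₁ ⊔
    fiberSpace (fun (c : α × γ) y => (c.1, y, c.2)) E₂ ⊔
    fiberSpace (fun (c : α × β) z => (c.1, c.2, z)) E₃

section CommSemiring

variable [CommSemiring R]

lemma mem_fiberSpace {ι κ : Type*} {φ : ι → α → κ} {E : Submodule R (α → R)} {T : κ → R} :
    T ∈ fiberSpace φ E ↔ ∀ c, (fun x => T (φ c x)) ∈ E := by
  simp only [fiberSpace, Submodule.mem_iInf, Submodule.mem_comap]
  rfl

lemma mem_sliceSpace {E₁ : Submodule R (α → R)} {E₂ : Submodule R (β → R)}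
    {E₃ : Submodule R (γ → R)} {T : α × β × γ → R} :
    T ∈ sliceSpace E₁ E₂ E₃ ↔ ∃ T₁ T₂ T₃ : α × β × γ → R, T₁ + T₂ + T₃ = T ∧
      (∀ y z, (fun x => T₁ (x, y, z)) ∈ E₁) ∧ (∀ x z, (fun y => T₂ (x, y, z)) ∈ E₂) ∧
      ∀ x y, (fun z => T₃ (x, y, z)) ∈ E₃ := by
  simp only [sliceSpace, Submodule.mem_sup, mem_fiberSpace, Prod.forall]
  constructor
  · rintro ⟨_, ⟨T₁, h₁, T₂, h₂, rfl⟩, T₃, h₃, rfl⟩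
    exact ⟨T₁, T₂, T₃, rfl, h₁, h₂, h₃⟩
  · rintro ⟨T₁, T₂, T₃, rfl, h₁, h₂, h₃⟩
    exact ⟨_, ⟨T₁, h₁, T₂, h₂, rfl⟩, T₃, h₃, rfl⟩

lemma mul_mul_mem_sliceSpace {E₁ : Submodule R (α → R)} {E₂ : Submodule R (β → R)}
    {E₃ : Submodule R (γ → R)} {f : α → R} {g : β → R} {h : γ → R}
    (hmem : f ∈ E₁ ∨ g ∈ E₂ ∨ h ∈ E₃) :
    (fun t : α × β × γ => f t.1 * g t.2.1 * h t.2.2) ∈ sliceSpace E₁ E₂ E₃ := by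
  rw [mem_sliceSpace]
  rcases hmem with hf | hg | hh
  · refine ⟨_, 0, 0, by rw [add_zero, add_zero], fun y z => ?_, fun _ _ => E₂.zero_mem,
      fun _ _ => E₃.zero_mem⟩
    convert E₁.smul_mem (g y * h z) hf using 1
    ext x
    simp only [Pi.smul_apply, smul_eq_mul]
    ring
  · refine ⟨0, _, 0, by rw [zero_add, add_zero], fun _ _ => E₁.zero_mem, fun x z => ?_,
      fun _ _ => E₃.zero_mem⟩
    convert E₂.smul_mem (f x * h z) hg using 1
    ext y
    simp only [Pi.smul_apply, smul_eq_mul]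
    ring
  · exact ⟨0, 0, _, by rw [zero_add, zero_add], fun _ _ => E₁.zero_mem, fun _ _ => E₂.zero_mem,
      fun x y => E₃.smul_mem (f x * g y) hh⟩

end CommSemiring

variable {K : Type*} [Field K]

lemma rank_contraction_le [Finite α] [Fintype β] [Fintype γ] {E₁ : Submodule K (α → K)}
    {E₂ : Submodule K (β → K)} {E₃ : Submodule K (γ → K)} {T : α × β × γ → K}
    (hT : T ∈ sliceSpace E₁ E₂ E₃) {v : γ → K} (hv : ∀ w ∈ E₃, w ⬝ᵥ v = 0) :
    (Matrix.of fun x y => ∑ z, T (x, y, z) * v z).rank ≤ finrank K E₁ + finrank K E₂ := by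
  obtain ⟨T₁, T₂, T₃, rfl, h₁, h₂, h₃⟩ := mem_sliceSpace.mp hT
  let M (S : α × β × γ → K) : Matrix α β K := Matrix.of fun x y => ∑ z, S (x, y, z) * v z
  have hM : M (T₁ + T₂ + T₃) = M T₁ + M T₂ := by
    ext x y
    have h₃_zero : ∑ z, T₃ (x, y, z) * v z = 0 := hv _ (h₃ x y)
    simp [M, add_mul, sum_add_distrib, h₃_zero]
  have rank_M₁ : (M T₁).rank ≤ finrank K E₁ := by
    rw [Matrix.rank_eq_finrank_span_cols]
    refine Submodule.finrank_mono (Submodule.span_le.mpr ?_)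
    rintro _ ⟨y, rfl⟩
    have hcol : (M T₁).col y = ∑ z, v z • fun x => T₁ (x, y, z) := by
      ext x
      simp [M, mul_comm]
    rw [hcol]
    exact E₁.sum_mem fun z _ => E₁.smul_mem (v z) (h₁ y z)
  have rank_M₂ : (M T₂).rank ≤ finrank K E₂ := by
    rw [Matrix.rank_eq_finrank_span_row]
    refine Submodule.finrank_mono (Submodule.span_le.mpr ?_)
    rintro _ ⟨x, rfl⟩
    have hrow : (M T₂).row x = ∑ z, v z • fun y => T₂ (x, y, z) := by
      ext y
      simp [M, mul_comm]
    rw [hrow]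
    exact E₂.sum_mem fun z _ => E₂.smul_mem (v z) (h₂ x z)
  calc (M (T₁ + T₂ + T₃)).rank = (M T₁ + M T₂).rank := by rw [hM]
    _ ≤ (M T₁).rank + (M T₂).rank := rank_add_le _ _
    _ ≤ finrank K E₁ + finrank K E₂ := add_le_add rank_M₁ rank_M₂

theorem card_le_of_diagonal_mem_sliceSpace [Fintype α] [DecidableEq α]
    {E₁ E₂ E₃ : Submodule K (α → K)}
    (h : (fun t : α × α × α => if t.1 = t.2.1 ∧ t.2.1 = t.2.2 then (1 : K) else 0) ∈
      sliceSpace E₁ E₂ E₃) :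
    Fintype.card α ≤ finrank K E₁ + finrank K E₂ + finrank K E₃ := by
  classical
  obtain ⟨v, hv, hcard⟩ := exists_orthogonal_card_le E₃
  have contraction_eq : (Matrix.of fun x y => ∑ z, (if x = y ∧ y = z then (1 : K) else 0) * v z) =
      Matrix.diagonal v := by
    ext x y
    by_cases hxy : x = y
    · simp [hxy]
    · simp [hxy]
  have hrank := rank_contraction_le h hv
  rw [contraction_eq, Matrix.rank_diagonal, Fintype.card_subtype] at hrank
  omega

end SliceRank

section LowDegree

variable {ι : Type*} [Fintype ι] [DecidableEq ι]

/-- The exponent vectors of the monomials in variables indexed by `ι` which have degree at most `m`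
in each variable and total degree at most a third of the maximum `m * card ι`. -/
def lowDegreeExponents (ι : Type*) [Fintype ι] [DecidableEq ι] (m : ℕ) : Finset (ι → ℕ) :=
  {e ∈ Fintype.piFinset fun _ => range (m + 1) | 3 * ∑ i, e i ≤ m * Fintype.card ι}

lemma mem_lowDegreeExponents {m : ℕ} {e : ι → ℕ} :
    e ∈ lowDegreeExponents ι m ↔ (∀ i, e i ≤ m) ∧ 3 * ∑ i, e i ≤ m * Fintype.card ι := by
  simp [lowDegreeExponents]

lemma exists_mem_lowDegreeExponents {m : ℕ} {s : ι → Fin 3 →₀ ℕ} (hs : ∀ i, (s i).degree ≤ m) :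
    ∃ k, (fun i => s i k) ∈ lowDegreeExponents ι m := by
  by_contra! hnot
  have hlarge (k : Fin 3) : m * Fintype.card ι < 3 * ∑ i, s i k := by
    by_contra! hle
    exact hnot k (mem_lowDegreeExponents.mpr ⟨fun i => ((s i).le_degree k).trans (hs i), hle⟩)
  have htotal : ∑ i, s i 0 + ∑ i, s i 1 + ∑ i, s i 2 ≤ m * Fintype.card ι :=
    calc ∑ i, s i 0 + ∑ i, s i 1 + ∑ i, s i 2 = ∑ i, (s i).degree := by
          simp only [Finsupp.degree_eq_sum, Fin.sum_univ_three, sum_add_distrib]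
      _ ≤ ∑ _i : ι, m := sum_le_sum fun i _ => hs i
      _ = m * Fintype.card ι := by simp [mul_comm]
  have h₀ := hlarge 0
  have h₁ := hlarge 1
  have h₂ := hlarge 2
  omega

/-- The span of the monomials of low degree, as functions on `α` through a family of points `X` of
the space `ι → R`. -/
def lowDegreeSpan {R α : Type*} [CommSemiring R] (X : α → ι → R) (m : ℕ) :
    Submodule R (α → R) :=
  Submodule.span R ((fun e x => ∏ i, X x i ^ e i) '' (lowDegreeExponents ι m : Set (ι → ℕ)))

lemma finrank_lowDegreeSpan_le {K α : Type*} [Field K] (X : α → ι → K) (m : ℕ) :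
    finrank K (lowDegreeSpan X m) ≤ #(lowDegreeExponents ι m) := by
  classical
  rw [lowDegreeSpan, ← coe_image]
  exact (finrank_span_finset_le_card _).trans card_image_le

lemma prod_eval_mem_sliceSpace {R α β γ : Type*} [CommSemiring R] (X : α → ι → R) (Y : β → ι → R)
    (Z : γ → ι → R) {m : ℕ} {p : MvPolynomial (Fin 3) R} (hp : p.totalDegree ≤ m) :
    (fun t : α × β × γ => ∏ i, MvPolynomial.eval ![X t.1 i, Y t.2.1 i, Z t.2.2 i] p) ∈
      sliceSpace (lowDegreeSpan X m) (lowDegreeSpan Y m) (lowDegreeSpan Z m) := by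
  let mon (s : ι → Fin 3 →₀ ℕ) : α × β × γ → R := fun t =>
    (∏ i, X t.1 i ^ s i 0) * (∏ i, Y t.2.1 i ^ s i 1) * ∏ i, Z t.2.2 i ^ s i 2
  have expansion : (fun t : α × β × γ => ∏ i, MvPolynomial.eval ![X t.1 i, Y t.2.1 i, Z t.2.2 i] p)
      = ∑ s ∈ Fintype.piFinset fun _ => p.support, (∏ i, p.coeff (s i)) • mon s := by
    ext t
    simp only [MvPolynomial.eval_eq', Fin.prod_univ_three, prod_univ_sum, Finset.sum_apply,
      Pi.smul_apply, smul_eq_mul, mon, prod_mul_distrib]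
    rfl
  rw [expansion]
  refine Submodule.sum_mem _ fun s hs => Submodule.smul_mem _ _ ?_
  have hdeg : ∀ i, (s i).degree ≤ m := fun i =>
    (MvPolynomial.le_totalDegree (Fintype.mem_piFinset.mp hs i)).trans hp
  obtain ⟨k, hk⟩ := exists_mem_lowDegreeExponents hdeg
  refine mul_mul_mem_sliceSpace (f := fun x => ∏ i, X x i ^ s i 0)
    (g := fun y => ∏ i, Y y i ^ s i 1) (h := fun z => ∏ i, Z z i ^ s i 2) ?_
  fin_cases k
  · exact Or.inl (Submodule.subset_span ⟨_, hk, rfl⟩)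
  · exact Or.inr (Or.inl (Submodule.subset_span ⟨_, hk, rfl⟩))
  · exact Or.inr (Or.inr (Submodule.subset_span ⟨_, hk, rfl⟩))

lemma card_lowDegreeExponents_mul_le (m : ℕ) {x : ℝ} (hx₀ : 0 < x) (hx₁ : x ≤ 1) :
    #(lowDegreeExponents ι m) * (x ^ ((m : ℝ) / 3)) ^ Fintype.card ι ≤
      (∑ j ∈ range (m + 1), x ^ j) ^ Fintype.card ι := by
  have weight_le {e : ι → ℕ} (he : e ∈ lowDegreeExponents ι m) :
      (x ^ ((m : ℝ) / 3)) ^ Fintype.card ι ≤ ∏ i, x ^ e i := by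
    have hdeg : (3 : ℝ) * (∑ i, e i : ℕ) ≤ m * Fintype.card ι := by
      exact_mod_cast (mem_lowDegreeExponents.mp he).2
    rw [prod_pow_eq_pow_sum, ← Real.rpow_mul_natCast hx₀.le, ← Real.rpow_natCast]
    exact Real.rpow_le_rpow_of_exponent_ge hx₀ hx₁ (by linarith)
  calc #(lowDegreeExponents ι m) * (x ^ ((m : ℝ) / 3)) ^ Fintype.card ι
      = ∑ _e ∈ lowDegreeExponents ι m, (x ^ ((m : ℝ) / 3)) ^ Fintype.card ι := by
        rw [sum_const, nsmul_eq_mul]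
    _ ≤ ∑ e ∈ lowDegreeExponents ι m, ∏ i, x ^ e i := sum_le_sum fun _ => weight_le
    _ ≤ ∑ e ∈ Fintype.piFinset fun _ : ι => range (m + 1), ∏ i, x ^ e i :=
        sum_le_sum_of_subset_of_nonneg (filter_subset _ _) fun _ _ _ => by positivity
    _ = (∑ j ∈ range (m + 1), x ^ j) ^ Fintype.card ι := by
        rw [← prod_univ_sum, prod_const, card_univ]

/-- The constant `c_q`, the infimum over `0 < x < 1` of `(1 - x ^ q) / (x ^ ((q - 1) / 3) (1 - x))`.
Its `N`-th power bounds the number of monomials of low degree in `N` variables. -/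
noncomputable def lowDegreeRate (q : ℕ) : ℝ :=
  sInf ((fun x : ℝ => (1 - x ^ q) / (x ^ (((q : ℝ) - 1) / 3) * (1 - x))) '' Set.Ioo (0 : ℝ) 1)

lemma card_lowDegreeExponents_le (ι : Type*) [Fintype ι] [DecidableEq ι] (m : ℕ) :
    (#(lowDegreeExponents ι m) : ℝ) ≤ lowDegreeRate (m + 1) ^ Fintype.card ι := by
  let c (x : ℝ) : ℝ := (1 - x ^ (m + 1)) / (x ^ ((((m + 1 : ℕ) : ℝ) - 1) / 3) * (1 - x))
  have c_eq {x : ℝ} (hx : x < 1) : c x = (∑ j ∈ range (m + 1), x ^ j) / x ^ ((m : ℝ) / 3) := by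
    simp only [c, Nat.cast_add, Nat.cast_one, add_sub_cancel_right]
    rw [← geom_sum_mul_neg x (m + 1), mul_div_mul_right _ _ (sub_pos.mpr hx).ne']
  have bound_of_mem : ∀ y ∈ c '' Set.Ioo 0 1,
      (#(lowDegreeExponents ι m) : ℝ) ≤ y ^ Fintype.card ι := by
    rintro _ ⟨x, ⟨hx₀, hx₁⟩, rfl⟩
    rw [c_eq hx₁, div_pow, le_div_iff₀ (by positivity)]
    exact card_lowDegreeExponents_mul_le m hx₀ hx₁.le
  have nonempty : (c '' Set.Ioo 0 1).Nonempty := (Set.nonempty_Ioo.mpr one_pos).image c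
  have bddBelow : BddBelow (c '' Set.Ioo 0 1) := by
    refine ⟨0, ?_⟩
    rintro _ ⟨x, ⟨hx₀, hx₁⟩, rfl⟩
    rw [c_eq hx₁]
    positivity
  have hclosed : IsClosed {y : ℝ | (#(lowDegreeExponents ι m) : ℝ) ≤ y ^ Fintype.card ι} :=
    isClosed_le continuous_const (continuous_pow _)
  exact closure_minimal bound_of_mem hclosed (csInf_mem_closure nonempty bddBelow)

end LowDegree

section TricoloredSumFree

variable {α V W : Type*}

/-- A tricolored sum-free family: three families of points of `V` indexed by `α` for which the only
zero sums are those of three points with the same index. -/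
def IsTricoloredSumFree [AddCommMonoid V] (X Y Z : α → V) : Prop :=
  ∀ x y z, X x + Y y + Z z = 0 ↔ x = y ∧ y = z

lemma IsTricoloredSumFree.map_equiv [AddCommMonoid V] [AddCommMonoid W] {X Y Z : α → V}
    (h : IsTricoloredSumFree X Y Z) (e : V ≃+ W) :
    IsTricoloredSumFree (e ∘ X) (e ∘ Y) (e ∘ Z) := fun x y z => by
  rw [← h x y z, Function.comp_apply, Function.comp_apply, Function.comp_apply, ← map_add,
    ← map_add, map_eq_zero_iff e e.injective]

lemma IsTricoloredSumFree.of_avoiding [AddCommGroup V] (f : V →+ V) {A : Set V}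
    (hA : ∀ x d, d ≠ 0 → ¬(x ∈ A ∧ x + d ∈ A ∧ x + f d ∈ A)) :
    IsTricoloredSumFree (fun x : A => f x - x) (fun y => -f y) (fun z => z) := by
  rintro ⟨x, hx⟩ ⟨y, hy⟩ ⟨z, hz⟩
  simp only [Subtype.mk.injEq]
  constructor
  · intro h
    have hz_eq : z = x + f (y - x) := by
      rw [map_sub, ← sub_eq_zero, ← h]
      abel
    have hd : y - x = 0 := by
      by_contra hne
      exact hA x (y - x) hne ⟨hx, by rwa [add_sub_cancel], hz_eq ▸ hz⟩
    have hyx : y = x := sub_eq_zero.mp hd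
    simp [hz_eq, hyx]
  · rintro ⟨rfl, rfl⟩
    abel

lemma prod_one_sub_pow_eq_ite {F ι : Type*} [Field F] [Fintype F] [Fintype ι] [DecidableEq α]
    {X Y Z : α → ι → F} (h : IsTricoloredSumFree X Y Z) (x y z : α) :
    ∏ i, (1 - (X x i + Y y i + Z z i) ^ (Fintype.card F - 1)) =
      if x = y ∧ y = z then 1 else 0 := by
  have hcard : Fintype.card F - 1 ≠ 0 := (Nat.sub_pos_of_lt Fintype.one_lt_card).ne'
  split_ifs with hxyz
  · refine prod_eq_one fun i _ => ?_
    have hzero : X x i + Y y i + Z z i = 0 := congrFun ((h x y z).mpr hxyz) i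
    rw [hzero, zero_pow hcard, sub_zero]
  · rw [← h x y z] at hxyz
    obtain ⟨i, hi⟩ := Function.ne_iff.mp hxyz
    refine prod_eq_zero (mem_univ i) ?_
    exact sub_eq_zero.mpr (FiniteField.pow_card_sub_one_eq_one _ hi).symm

lemma IsTricoloredSumFree.card_le_card_lowDegreeExponents {F ι : Type*} [Field F] [Fintype F]
    [Fintype ι] [DecidableEq ι] [Fintype α] {X Y Z : α → ι → F} (h : IsTricoloredSumFree X Y Z) :
    Fintype.card α ≤ 3 * #(lowDegreeExponents ι (Fintype.card F - 1)) := by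
  classical
  set m := Fintype.card F - 1
  let p : MvPolynomial (Fin 3) F := 1 - (∑ k, MvPolynomial.X k) ^ m
  have hp : p.totalDegree ≤ m := by
    have hlin : (∑ k : Fin 3, MvPolynomial.X k : MvPolynomial (Fin 3) F).totalDegree ≤ 1 :=
      MvPolynomial.totalDegree_finsetSum_le fun k _ => (MvPolynomial.totalDegree_X k).le
    have hpow : ((∑ k : Fin 3, MvPolynomial.X k : MvPolynomial (Fin 3) F) ^ m).totalDegree ≤ m := by
      simpa using (MvPolynomial.totalDegree_pow _ m).trans (Nat.mul_le_mul_left m hlin)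
    exact (MvPolynomial.totalDegree_sub _ _).trans (max_le (by simp) hpow)
  have eval_p (u v w : F) : MvPolynomial.eval ![u, v, w] p = 1 - (u + v + w) ^ m := by
    simp [p, Fin.sum_univ_three]
  have diagonal_mem : (fun t : α × α × α => if t.1 = t.2.1 ∧ t.2.1 = t.2.2 then (1 : F) else 0) ∈
      sliceSpace (lowDegreeSpan X m) (lowDegreeSpan Y m) (lowDegreeSpan Z m) := by
    simpa only [eval_p, m, prod_one_sub_pow_eq_ite h] using prod_eval_mem_sliceSpace X Y Z hp
  have hX := finrank_lowDegreeSpan_le X m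
  have hY := finrank_lowDegreeSpan_le Y m
  have hZ := finrank_lowDegreeSpan_le Z m
  have hcard := card_le_of_diagonal_mem_sliceSpace diagonal_mem
  omega

theorem IsTricoloredSumFree.card_le (F : Type*) [Field F] [Fintype F] [AddCommGroup V]
    [Module F V] [FiniteDimensional F V] [Fintype α] {X Y Z : α → V}
    (h : IsTricoloredSumFree X Y Z) :
    (Fintype.card α : ℝ) ≤ 3 * lowDegreeRate (Fintype.card F) ^ finrank F V := by
  have hcoord := (h.map_equiv (finBasis F V).equivFun.toAddEquiv).card_le_card_lowDegreeExponents
  have hcount := card_lowDegreeExponents_le (Fin (finrank F V)) (Fintype.card F - 1)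
  rw [Nat.sub_add_cancel Fintype.card_pos, Fintype.card_fin] at hcount
  calc (Fintype.card α : ℝ)
      ≤ 3 * #(lowDegreeExponents (Fin (finrank F V)) (Fintype.card F - 1)) := by
        exact_mod_cast hcoord
    _ ≤ 3 * lowDegreeRate (Fintype.card F) ^ finrank F V := by gcongr

end TricoloredSumFree

/-- The block matrix `[[b, -ab], [ab, b]]` acting on pairs of vectors. If `a ^ 2 = 3` and `b = 2⁻¹`,
it is the rotation `M₂` by sixty degrees, which completes an edge to an equilateral triangle. -/
def equilateralMap {R V : Type*} [CommRing R] [AddCommGroup V] [Module R V] (a b : R) :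
    V × V →ₗ[R] V × V :=
  LinearMap.prod (b • LinearMap.fst R V V - (a * b) • LinearMap.snd R V V)
    ((a * b) • LinearMap.fst R V V + b • LinearMap.snd R V V)

theorem stmt12_general (F : Type*) {V : Type*} [Field F] [Fintype F] [AddCommGroup V] [Module F V]
    [FiniteDimensional F V] (f : V →+ V) (A : Finset V)
    (hA : ∀ x d, d ≠ 0 → ¬(x ∈ A ∧ x + d ∈ A ∧ x + f d ∈ A)) :
    (#A : ℝ) ≤ 3 * lowDegreeRate (Fintype.card F) ^ finrank F V := by
  simpa using (IsTricoloredSumFree.of_avoiding f (A := (A : Set V)) hA).card_le F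

theorem stmt12 {q n : ℕ} (hq : Odd q) (hpp : IsPrimePow q) (hn : 0 < n)
    (F : Type*) [Field F] [Fintype F] (hcard : Fintype.card F = q)
    (a : F) (ha : a ^ 2 = 3) (ha0 : a ≠ 0) (b : F) (hb : b = 2⁻¹)
    (A : Finset ((Fin n → F) × (Fin n → F)))
    (hA : ∀ x d : (Fin n → F) × (Fin n → F), d ≠ 0 →
      ¬(x ∈ A ∧ x + d ∈ A ∧
        x + (b • d.1 - (a * b) • d.2, (a * b) • d.1 + b • d.2) ∈ A)) :
    (A.card : ℝ) ≤ 3 *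
      (sInf ((fun x : ℝ => (1 - x ^ q) / (x ^ (((q : ℝ) - 1) / 3) * (1 - x))) ''
        Set.Ioo (0 : ℝ) 1)) ^ (2 * n) := by
  simpa [hcard, two_mul, lowDegreeRate] using
    stmt12_general F (equilateralMap a b).toAddMonoidHom A hA
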